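/- Let T be a tree on n ≥ 2 vertices with p pendant vertices. Then the independence number of T satisfies α(T) ≤ ⌊(2n + p − 2)/3⌋. -/

import Mathlib

/-!
The edges meeting an independent set `s` are counted without repetition by the degrees of its
vertices, so `∑ v ∈ s, d(v) ≤ |E|`. If no vertex of `s` is isolated then `|s| ≤ ∑ v ∈ s, d(v)`, and
`2|s| ≤ ∑ v ∈ s, d(v) + p`, since only pendant vertices have degree less than two. Adding the two
bounds gives `3|s| ≤ 2|E| + p`, and a tree has `|E| = n - 1`.
-/

open SimpleGraph

/-- An induced matching in `G`: a set of edges of `G` that are pairwise vertex-disjoint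
and such that no edge of `G` joins endpoints of two distinct edges. -/
def SimpleGraph.IsInducedMatching {V : Type*} (G : SimpleGraph V) (M : Finset (Sym2 V)) : Prop :=
  (∀ e ∈ M, e ∈ G.edgeSet) ∧
    ∀ e ∈ M, ∀ f ∈ M, e ≠ f → ∀ u ∈ e, ∀ v ∈ f, u ≠ v ∧ ¬ G.Adj u v

/-- The induced matching number of `G`: the maximum size of an induced matching. -/
noncomputable def SimpleGraph.inducedMatchingNum {V : Type*} (G : SimpleGraph V) : ℕ :=
  sSup {n | ∃ M : Finset (Sym2 V), G.IsInducedMatching M ∧ M.card = n}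

/-- The independence number of `G`: the maximum size of a set of pairwise
non-adjacent vertices. -/
noncomputable def SimpleGraph.indepNumber {V : Type*} (G : SimpleGraph V) : ℕ :=
  sSup {n | ∃ s : Finset V, (∀ u ∈ s, ∀ v ∈ s, ¬ G.Adj u v) ∧ s.card = n}

/-- The number of pendant vertices (leaves, i.e. vertices of degree one) of `G`. -/
noncomputable def SimpleGraph.pendantCount {V : Type*} [Fintype V] (G : SimpleGraph V)
    [DecidableRel G.Adj] : ℕ :=
  {v : V | G.degree v = 1}.ncard

open scoped Finset

section

variable {V : Type*} {G : SimpleGraph V}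

theorem indepNumber_eq_indepNum : G.indepNumber = G.indepNum := by
  have isIndepSet_iff (s : Finset V) : (∀ u ∈ s, ∀ v ∈ s, ¬G.Adj u v) ↔ G.IsIndepSet s :=
    ⟨fun hs u hu v hv _ ↦ hs u hu v hv, fun hs u hu v hv huv ↦ hs hu hv huv.ne huv⟩
  simp only [indepNumber, indepNum, isNIndepSet_iff, isIndepSet_iff]

theorem pairwiseDisjoint_incidenceSet_of_isIndepSet {s : Set V} (hs : G.IsIndepSet s) :
    s.PairwiseDisjoint G.incidenceSet := fun _u hu _v hv huv ↦
  Set.disjoint_iff_inter_eq_empty.mpr <|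
    G.incidenceSet_inter_incidenceSet_of_not_adj (hs hu hv huv) huv

variable {s : Finset V}

theorem sum_degree_le_card_edgeFinset_of_isIndepSet [G.LocallyFinite] [Fintype G.edgeSet]
    (hs : G.IsIndepSet s) : ∑ v ∈ s, G.degree v ≤ #G.edgeFinset := by
  classical
  have hdisj : (s : Set V).PairwiseDisjoint fun v ↦ G.incidenceFinset v := fun u hu v hv huv ↦ by
    simpa [Function.onFun, ← Finset.disjoint_coe] using
      pairwiseDisjoint_incidenceSet_of_isIndepSet hs hu hv huv
  calc ∑ v ∈ s, G.degree v
      = #(s.biUnion fun v ↦ G.incidenceFinset v) := by simp [Finset.card_biUnion hdisj]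
    _ ≤ #G.edgeFinset :=
      Finset.card_le_card <| Finset.biUnion_subset.mpr fun v _ ↦ G.incidenceFinset_subset v

theorem card_le_sum_degree [G.LocallyFinite] (hpos : ∀ v ∈ s, 0 < G.degree v) :
    #s ≤ ∑ v ∈ s, G.degree v := by
  rw [Finset.card_eq_sum_ones]
  exact Finset.sum_le_sum hpos

theorem two_mul_card_le_sum_degree_add_card_filter [G.LocallyFinite]
    (hpos : ∀ v ∈ s, 0 < G.degree v) :
    2 * #s ≤ ∑ v ∈ s, G.degree v + #{v ∈ s | G.degree v = 1} := by
  have two_le (v : V) (hv : v ∈ s) : 2 ≤ G.degree v + if G.degree v = 1 then 1 else 0 := by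
    have := hpos v hv
    split_ifs <;> omega
  calc 2 * #s = #s • 2 := mul_comm _ _
    _ ≤ ∑ v ∈ s, (G.degree v + if G.degree v = 1 then 1 else 0) := s.card_nsmul_le_sum _ 2 two_le
    _ = ∑ v ∈ s, G.degree v + #{v ∈ s | G.degree v = 1} := by
      rw [Finset.sum_add_distrib, Finset.card_filter]

theorem card_filter_degree_eq_one_le_pendantCount [Fintype V] [DecidableRel G.Adj] :
    #{v ∈ s | G.degree v = 1} ≤ G.pendantCount := by
  rw [pendantCount, ← Set.ncard_coe_finset]
  exact Set.ncard_le_ncard fun v hv ↦ (Finset.mem_filter.mp hv).2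

end

theorem tree_indepNumber_le_floor_general {V : Type*} [Fintype V] (G : SimpleGraph V)
    [DecidableRel G.Adj] (hpos : ∀ v, 0 < G.degree v) :
    (G.indepNumber : ℤ) ≤ ⌊((2 * (#G.edgeFinset : ℚ) + G.pendantCount) / 3 : ℚ)⌋ := by
  obtain ⟨s, hs, hcard⟩ := G.exists_isNIndepSet_indepNum
  have hdegree := sum_degree_le_card_edgeFinset_of_isIndepSet hs
  have hone := card_le_sum_degree fun v (_ : v ∈ s) ↦ hpos v
  have htwo := two_mul_card_le_sum_degree_add_card_filter fun v (_ : v ∈ s) ↦ hpos v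
  have hpendant := card_filter_degree_eq_one_le_pendantCount (G := G) (s := s)
  have hthree : G.indepNumber * 3 ≤ 2 * #G.edgeFinset + G.pendantCount := by
    rw [indepNumber_eq_indepNum, ← hcard]
    omega
  rw [Int.le_floor, le_div_iff₀ three_pos]
  exact_mod_cast hthree

/-- Upper bound for the independence number of a tree:
`α(T) ≤ ⌊(2n + p − 2)/3⌋`. -/
theorem tree_indepNumber_le_floor {V : Type*} [Fintype V] (G : SimpleGraph V)
    [DecidableRel G.Adj] (hT : G.IsTree)
    (n p : ℕ) (hn : n = Fintype.card V) (hn2 : 2 ≤ n)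
    (hp : p = G.pendantCount) :
    (G.indepNumber : ℤ) ≤ ⌊((2 * (n : ℚ) + p - 2) / 3 : ℚ)⌋ := by
  have : Nontrivial V := Fintype.one_lt_card_iff_nontrivial.mp (hn ▸ hn2)
  have hpos (v : V) : 0 < G.degree v := hT.connected.preconnected.degree_pos_of_nontrivial v
  have hedges : (n : ℚ) = #G.edgeFinset + 1 := by exact_mod_cast hn.trans hT.card_edgeFinset.symm
  have hnum : 2 * (n : ℚ) + p - 2 = 2 * #G.edgeFinset + G.pendantCount := by
    rw [hp, hedges]
    ring
  exact hnum ▸ tree_indepNumber_le_floor_general G hpos
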